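/- arXiv:1205.6256 — 2 statements merged into one kernel-verified Lean document; each statement's English description precedes it below -/
import Mathlib

section
/- Let L be a finite ULD lattice that is order-isomorphic to the configuration space of a chip firing game CFG(G,O) reaching a unique fixed point, where the directed multigraph G is acyclic. Then the directed graph 𝒢 (on the meet-irreducibles of L) is acyclic. -/
open Classical

section CFGdefs

variable {V : Type*}

/-- Out-degree of a vertex in a directed multigraph with edge multiplicities `E`. -/
noncomputable def outDeg (E : V → V → ℕ) (v : V) : ℕ := ∑ᶠ u, E v u

/-- A vertex is a sink if all its outgoing edges are loops. -/
def IsSink (E : V → V → ℕ) (v : V) : Prop := outDeg E v = E v v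

/-- A vertex is firable in configuration `c`. -/
def Firable (E : V → V → ℕ) (c : V → ℕ) (v : V) : Prop :=
  ¬ IsSink E v ∧ outDeg E v ≤ c v

/-- The result of firing vertex `v` in configuration `c`. -/
noncomputable def fire (E : V → V → ℕ) (c : V → ℕ) (v : V) : V → ℕ :=
  fun u => if u = v then c v - outDeg E v + E v v else c u + E v u

/-- The configuration obtained by firing a list of vertices in order. -/
noncomputable def fireList (E : V → V → ℕ) : (V → ℕ) → List V → (V → ℕ)
  | c, [] => c
  | c, v :: l => fireList E (fire E c v) l

/-- A list of vertices is a valid firing sequence from `c`. -/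
def ValidSeq (E : V → V → ℕ) : (V → ℕ) → List V → Prop
  | _, [] => True
  | c, v :: l => Firable E c v ∧ ValidSeq E (fire E c v) l

/-- `c'` is reachable from `c` by a finite sequence of firings. -/
def Reaches (E : V → V → ℕ) (c c' : V → ℕ) : Prop :=
  ∃ l : List V, ValidSeq E c l ∧ fireList E c l = c'

/-- A configuration with no firable vertex. -/
def FixedPt (E : V → V → ℕ) (c : V → ℕ) : Prop := ∀ v, ¬ Firable E c v

/-- The chip firing game `CFG(G,O)` reaches a unique fixed point. -/
def ReachesUFP (E : V → V → ℕ) (O : V → ℕ) : Prop :=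
  ∃ fp : V → ℕ, Reaches E O fp ∧ FixedPt E fp ∧ ∀ c, Reaches E O c → Reaches E c fp

/-- The game is simple: in every firing sequence from `O` to the fixed point,
each vertex fires at most once. -/
def SimpleCFG (E : V → V → ℕ) (O : V → ℕ) : Prop :=
  ∀ l : List V, ValidSeq E O l → FixedPt E (fireList E O l) → l.Nodup

/-- Single firing step from `c` to `c'` by firing vertex `v`. -/
def FireStep (E : V → V → ℕ) (c : V → ℕ) (v : V) (c' : V → ℕ) : Prop :=
  Firable E c v ∧ fire E c v = c'

/-- The partial order `L` is order-isomorphic to the configuration space of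
`CFG(G,O)` ordered by reachability. -/
def Generates (E : V → V → ℕ) (O : V → ℕ) (L : Type*) [PartialOrder L] : Prop :=
  ∃ f : L ≃ {c : V → ℕ // Reaches E O c},
    ∀ a b : L, a ≤ b ↔ Reaches E (f a).val (f b).val

/-- The support graph is connected (as an undirected graph). -/
def ConnectedG (E : V → V → ℕ) : Prop :=
  ∀ u v : V, Relation.ReflTransGen (fun a b => 0 < E a b ∨ 0 < E b a) u v

/-- The support graph together with its initial data is an Abelian Sandpile Model. -/
def IsASM (E : V → V → ℕ) : Prop :=
  ConnectedG E ∧ ∃ s : V, IsSink E s ∧ (∀ v, IsSink E v → v = s) ∧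
    ∀ v₁ v₂ : V, v₁ ≠ v₂ → v₁ ≠ s → v₂ ≠ s → E v₁ v₂ = E v₂ v₁

/-- The directed multigraph has no directed cycle. -/
def AcyclicG (E : V → V → ℕ) : Prop :=
  ∀ v : V, ¬ Relation.TransGen (fun a b => 0 < E a b) v v

end CFGdefs

/-- `L` is generated by some chip firing game reaching a unique fixed point. -/
def MemLCFG (L : Type*) [PartialOrder L] : Prop :=
  ∃ (V : Type) (_ : Finite V) (E : V → V → ℕ) (O : V → ℕ),
    ReachesUFP E O ∧ Generates E O L

/-- `L` is generated by some Abelian Sandpile Model reaching a unique fixed point. -/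
def MemLASM (L : Type*) [PartialOrder L] : Prop :=
  ∃ (V : Type) (_ : Finite V) (E : V → V → ℕ) (O : V → ℕ),
    IsASM E ∧ ReachesUFP E O ∧ Generates E O L

section Latticedefs

variable {L : Type*} [Lattice L]

/-- `m` is meet-irreducible: it has exactly one upper cover. -/
def MeetIrred (m : L) : Prop := ∃! y, m ⋖ y

/-- `j` is join-irreducible: it has exactly one lower cover. -/
def JoinIrred (j : L) : Prop := ∃! y, y ⋖ j

/-- The set `M_x \ M_y` of meet-irreducibles above `x` but not above `y`. -/
def MsetDiff (x y : L) : Set L := {m | MeetIrred m ∧ x ≤ m ∧ ¬ y ≤ m}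

/-- The set `M \ M_a` of meet-irreducibles not above `a`. -/
def MnotAbove (a : L) : Set L := {m | MeetIrred m ∧ ¬ a ≤ m}

/-- `x⁺`: the join of all upper covers of `x`. -/
noncomputable def uplus [Fintype L] [OrderBot L] (x : L) : L :=
  Finset.univ.sup (fun y => if x ⋖ y then y else ⊥)

/-- `L` is upper locally distributive: for every `x ≠ ⊤` the interval `[x, x⁺]`
is isomorphic to a Boolean lattice (a hypercube). -/
def IsULD (L : Type*) [Lattice L] [Fintype L] [BoundedOrder L] : Prop :=
  ∀ x : L, x ≠ ⊤ → ∃ n : ℕ, Nonempty (↥(Set.Icc x (uplus x)) ≃o Set (Fin n))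

/-- `𝔘_m`: the minimal elements of `{x : ∃ y, x ⋖ y and 𝔪(x,y) = m}`. -/
def Uset (m : L) : Set L :=
  {x | Minimal (fun z => ∃ y, z ⋖ y ∧ MsetDiff z y = {m}) x}

/-- `𝔏_m`: the maximal elements of `{x : a ≰ x for every a ∈ 𝔘_m}`. -/
def Lset (m : L) : Set L :=
  {x | Maximal (fun z => ∀ a ∈ Uset m, ¬ a ≤ z) x}

/-- `(w, e)` is a (non-negative integer) solution of the system `E(m)`. -/
def SolvesE [OrderBot L] (m : L) (w : ℕ) (e : L → ℕ) : Prop :=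
  (Uset m = {(⊥ : L)} → 1 ≤ w) ∧
  (Uset m ≠ {(⊥ : L)} →
    (∀ a ∈ Lset m, (∑ᶠ x ∈ MnotAbove a, e x) < w) ∧
    (∀ a ∈ Uset m, w ≤ ∑ᶠ x ∈ MnotAbove a, e x))

/-- The system `E(m)` has a non-negative integer solution. -/
def HasSolE [OrderBot L] (m : L) : Prop := ∃ w e, SolvesE m w e

/-- The variable `e_{x,m}` occurs in the system `𝔈(m)`. -/
def VarOccurs [OrderBot L] (x m : L) : Prop :=
  MeetIrred m ∧ Uset m ≠ {(⊥ : L)} ∧ ∃ a ∈ Uset m ∪ Lset m, x ∈ MnotAbove a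

/-- `(W, Ee)` is a non-negative integer solution of the system `Ω`. -/
def SolvesOmega [OrderBot L] (W : L → ℕ) (Ee : L → L → ℕ) : Prop :=
  (∀ m : L, MeetIrred m → SolvesE m (W m) (fun x => Ee x m)) ∧
  (∀ m₁ m₂ : L, m₁ ≠ m₂ → VarOccurs m₁ m₂ → VarOccurs m₂ m₁ → Ee m₁ m₂ = Ee m₂ m₁)

/-- The edge relation of the directed graph `𝒢` on the meet-irreducibles. -/
def Gedge (m₁ m₂ : L) : Prop :=
  MeetIrred m₁ ∧ MeetIrred m₂ ∧ ∃ a ∈ Uset m₂, m₁ ∈ MnotAbove a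

end Latticedefs

/-- The system `Ω` has a non-negative integer solution. -/
def HasSolOmega (L : Type*) [Lattice L] [OrderBot L] : Prop :=
  ∃ W Ee, SolvesOmega (L := L) W Ee

/-- The directed graph `𝒢` on the meet-irreducibles is acyclic. -/
def GAcyclic (L : Type*) [Lattice L] : Prop :=
  ∀ m : L, ¬ Relation.TransGen (Gedge (L := L)) m m

/-!
Record an element of the configuration space by its *shot multiset*, the vertices fired on the way
to it. Removing from one legal firing sequence the vertices already fired by another keeps it
legal, so the shot multisets form an antimatroid with repetition. On an acyclic graph a
configuration determines its shot multiset, by induction along the graph from the balance of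
chips at each vertex, so the configuration space embeds in the multisets of vertices.

In this embedding a meet-irreducible `m` is an element at which a single vertex `v` can fire, and
`a ≤ m` says that `v` fires at most as often in `a` as in `m`. The elements of `𝔘_m` are the minimal
ones at which `v` can fire and has fired as often as in `m`. Forgetting all firings outside the
ancestors of `v` preserves these conditions, so minimality makes every vertex fired by an element
of `𝔘_m` an ancestor of `v`. Hence along every edge of `𝒢` the pair of `v` and its number of
firings increases lexicographically.
-/

section FiringSequences

variable {V : Type*} {E : V → V → ℕ} {c : V → ℕ} {l l₁ l₂ : List V} {v w : V}

lemma validSeq_append :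
    ValidSeq E c (l₁ ++ l₂) ↔ ValidSeq E c l₁ ∧ ValidSeq E (fireList E c l₁) l₂ := by
  induction l₁ generalizing c with
  | nil => simp [ValidSeq, fireList]
  | cons v l ih => simp [ValidSeq, fireList, ih, and_assoc]

lemma fireList_append : fireList E c (l₁ ++ l₂) = fireList E (fireList E c l₁) l₂ := by
  induction l₁ generalizing c with
  | nil => rfl
  | cons v l ih => simp [fireList, ih]

lemma Firable.fire_of_ne (hv : Firable E c v) (hvw : v ≠ w) : Firable E (fire E c w) v := by
  refine ⟨hv.1, ?_⟩
  rw [fire, if_neg hvw]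
  exact hv.2.trans le_self_add

lemma fire_comm (hv : Firable E c v) (hw : Firable E c w) :
    fire E (fire E c v) w = fire E (fire E c w) v := by
  have := hv.2
  have := hw.2
  funext u
  simp only [fire]
  grind

lemma ValidSeq.erase (hl : ValidSeq E c l) (hv : Firable E c v) :
    ValidSeq E (fire E c v) (l.erase v) := by
  induction l generalizing c with
  | nil => exact hl
  | cons w l ih =>
    obtain ⟨hw, hl⟩ := hl
    by_cases hwv : w = v
    · subst hwv
      rwa [List.erase_cons_head]
    · rw [List.erase_cons_tail (by simpa using hwv)]
      refine ⟨hw.fire_of_ne hwv, ?_⟩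
      rw [fire_comm hv hw]
      exact ih hl (hv.fire_of_ne (Ne.symm hwv))

lemma ValidSeq.append_diff (h₁ : ValidSeq E c l₁) (h₂ : ValidSeq E c l₂) :
    ValidSeq E c (l₁ ++ l₂.diff l₁) := by
  induction l₁ generalizing c l₂ with
  | nil => exact h₂
  | cons v l ih =>
    rw [List.diff_cons]
    exact ⟨h₁.1, ih h₁.2 (h₂.erase h₁.1)⟩

lemma ValidSeq.filter {p : V → Prop} (hp : ∀ u w, 0 < E u w → p w → p u) {c' : V → ℕ}
    (hl : ValidSeq E c l) (hc : ∀ u, p u → c' u = c u) : ValidSeq E c' (l.filter p) := by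
  induction l generalizing c c' with
  | nil => trivial
  | cons v l ih =>
    by_cases hv : p v
    · rw [List.filter_cons_of_pos (by simpa using hv)]
      refine ⟨⟨hl.1.1, (hc v hv).symm ▸ hl.1.2⟩, ih hl.2 fun u hu => ?_⟩
      simp only [fire, hc u hu, hc v hv]
    · rw [List.filter_cons_of_neg (by simpa using hv)]
      refine ih hl.2 fun u hu => ?_
      have huv : u ≠ v := fun h => hv (h ▸ hu)
      have hvu : E v u = 0 := Nat.eq_zero_of_not_pos fun h => hv (hp v u h hu)
      rw [fire, if_neg huv, hvu, add_zero, hc u hu]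

lemma ValidSeq.fireList_add_count_mul_outDeg (hl : ValidSeq E c l) (u : V) :
    fireList E c l u + l.count u * outDeg E u = c u + (l.map (E · u)).sum := by
  induction l generalizing c with
  | nil => simp [fireList]
  | cons v l ih =>
    have balance := ih hl.2
    have enough_chips : outDeg E v ≤ c v := hl.1.2
    rw [fireList, List.map_cons, List.sum_cons, List.count_cons, add_mul]
    by_cases huv : u = v
    · subst huv
      simp only [fire, if_true, beq_self_eq_true, one_mul] at balance ⊢
      omega
    · simp only [fire, if_neg huv, beq_iff_eq, if_neg (Ne.symm huv)] at balance ⊢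
      omega

lemma ValidSeq.fireList_eq_of_perm (h₁ : ValidSeq E c l₁) (h₂ : ValidSeq E c l₂)
    (h : l₁.Perm l₂) : fireList E c l₁ = fireList E c l₂ := by
  funext u
  have balance₁ := h₁.fireList_add_count_mul_outDeg u
  have balance₂ := h₂.fireList_add_count_mul_outDeg u
  rw [h.count_eq, (h.map _).sum_eq] at balance₁
  omega

lemma sum_map_eq_finsum_count_nsmul {α M : Type*} [AddCommMonoid M] (l : List α) (f : α → M) :
    (l.map f).sum = ∑ᶠ a, l.count a • f a := by
  rw [Finset.sum_list_map_count, finsum_eq_sum_of_support_subset]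
  intro a ha
  rw [List.coe_toFinset]
  contrapose! ha
  rw [Function.notMem_support, List.count_eq_zero_of_not_mem ha, zero_nsmul]

lemma ValidSeq.count_eq_of_forall_pos (h₁ : ValidSeq E c l₁) (h₂ : ValidSeq E c l₂)
    (h : fireList E c l₁ = fireList E c l₂) (hv : 0 < outDeg E v)
    (hcount : ∀ w, 0 < E w v → l₁.count w = l₂.count w) : l₁.count v = l₂.count v := by
  have received : (l₁.map (E · v)).sum = (l₂.map (E · v)).sum := by
    rw [sum_map_eq_finsum_count_nsmul, sum_map_eq_finsum_count_nsmul]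
    refine finsum_congr fun w => ?_
    rcases Nat.eq_zero_or_pos (E w v) with hwv | hwv
    · rw [hwv, smul_zero, smul_zero]
    · rw [hcount w hwv]
  have balance₁ := h₁.fireList_add_count_mul_outDeg v
  have balance₂ := h₂.fireList_add_count_mul_outDeg v
  rw [h, received] at balance₁
  exact Nat.eq_of_mul_eq_mul_right hv (by omega)

lemma AcyclicG.outDeg_pos_of_firable (hE : AcyclicG E) (hv : Firable E c v) : 0 < outDeg E v := by
  have no_loop : E v v = 0 := Nat.eq_zero_of_not_pos fun h => hE v (.single h)
  exact Nat.pos_of_ne_zero fun h => hv.1 (h.trans no_loop.symm)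

lemma ValidSeq.exists_firable_of_mem (hl : ValidSeq E c l) (hv : v ∈ l) :
    ∃ c', Firable E c' v := by
  obtain ⟨l₁, l₂, rfl⟩ := List.append_of_mem hv
  exact ⟨_, (validSeq_append.1 hl).2.1⟩

lemma AcyclicG.perm_of_fireList_eq (hE : AcyclicG E) (h₁ : ValidSeq E c l₁)
    (h₂ : ValidSeq E c l₂) (h : fireList E c l₁ = fireList E c l₂) : l₁.Perm l₂ := by
  have : Std.Irrefl (Relation.TransGen fun u w => 0 < E u w) := ⟨hE⟩
  have : IsStrictOrder V (Relation.TransGen fun u w => 0 < E u w) := {}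
  have wf := (l₁ ++ l₂).finite_toSet.wellFoundedOn (r := Relation.TransGen fun u w => 0 < E u w)
  have count_eq_of_notMem : ∀ v, v ∉ l₁ ++ l₂ → l₁.count v = l₂.count v := fun v hv => by
    rw [List.mem_append, not_or] at hv
    rw [List.count_eq_zero_of_not_mem hv.1, List.count_eq_zero_of_not_mem hv.2]
  refine List.perm_iff_count.2 fun v => ?_
  by_cases hv : v ∉ l₁ ++ l₂
  · exact count_eq_of_notMem v hv
  refine wf.induction (P := fun v => l₁.count v = l₂.count v) (not_not.1 hv) fun u hu ih => ?_
  obtain ⟨c', hc'⟩ : ∃ c', Firable E c' u :=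
    (List.mem_append.1 hu).elim h₁.exists_firable_of_mem h₂.exists_firable_of_mem
  refine h₁.count_eq_of_forall_pos h₂ h (hE.outDeg_pos_of_firable hc') fun w hwu => ?_
  by_cases hw : w ∈ l₁ ++ l₂
  · exact ih w hw (.single hwu)
  · exact count_eq_of_notMem w hw

lemma AcyclicG.reaches_fireList_iff (hE : AcyclicG E) (h₁ : ValidSeq E c l₁)
    (h₂ : ValidSeq E c l₂) :
    Reaches E (fireList E c l₁) (fireList E c l₂) ↔ l₁.Subperm l₂ := by
  constructor
  · rintro ⟨l, hl, hl₂⟩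
    have valid : ValidSeq E c (l₁ ++ l) := validSeq_append.2 ⟨h₁, hl⟩
    have perm := hE.perm_of_fireList_eq valid h₂ (by rw [fireList_append, hl₂])
    exact (List.sublist_append_left l₁ l).subperm.trans perm.subperm
  · intro h
    have perm : (l₁ ++ l₂.diff l₁).Perm l₂ :=
      List.subperm_append_diff_self_of_count_le fun v _ => h.count_le v
    have valid := h₁.append_diff h₂
    refine ⟨l₂.diff l₁, (validSeq_append.1 valid).2, ?_⟩
    rw [← fireList_append, valid.fireList_eq_of_perm h₂ perm]

end FiringSequences

/-- An antimatroid with repetition, given by its feasible multisets: they are closed under union,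
and a feasible multiset can be enlarged one element at a time towards any larger one. -/
structure IsAntimatroid {V : Type*} (S : Set (Multiset V)) : Prop where
  supClosed : SupClosed S
  exists_cons_mem_of_lt : ∀ s ∈ S, ∀ t ∈ S, s < t → ∃ v, v ::ₘ s ∈ S ∧ v ::ₘ s ≤ t

/-- The shot multisets of `CFG(G,O)`: the multisets of vertices fired along the legal firing
sequences from `O`, counted with multiplicity. They encode its shot-vectors. -/
def shotMultisets {V : Type*} (E : V → V → ℕ) (O : V → ℕ) : Set (Multiset V) :=
  {s | ∃ l : List V, ValidSeq E O l ∧ (l : Multiset V) = s}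

section ShotMultisets

variable {V : Type*} {E : V → V → ℕ} {O : V → ℕ}

lemma isAntimatroid_shotMultisets : IsAntimatroid (shotMultisets E O) where
  supClosed := by
    rintro _ ⟨l₁, h₁, rfl⟩ _ ⟨l₂, h₂, rfl⟩
    refine ⟨l₁ ++ l₂.diff l₁, h₁.append_diff h₂, ?_⟩
    rw [← Multiset.coe_add, ← Multiset.coe_sub, add_comm, sup_comm]
    rfl
  exists_cons_mem_of_lt := by
    rintro _ ⟨l₁, h₁, rfl⟩ _ ⟨l₂, h₂, rfl⟩ hlt
    have perm : (l₁ ++ l₂.diff l₁).Perm l₂ :=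
      List.subperm_append_diff_self_of_count_le fun v _ => (Multiset.coe_le.1 hlt.le).count_le v
    have valid := h₁.append_diff h₂
    rcases hd : l₂.diff l₁ with _ | ⟨v, d⟩
    · rw [hd, List.append_nil] at perm
      exact absurd (Multiset.coe_eq_coe.2 perm) hlt.ne
    · rw [hd, List.append_cons] at perm valid
      have cons_eq : ((l₁ ++ [v] : List V) : Multiset V) = v ::ₘ l₁ :=
        Multiset.coe_eq_coe.2 (List.perm_append_singleton v l₁)
      refine ⟨v, ⟨_, (validSeq_append.1 valid).1, cons_eq⟩, ?_⟩
      rw [← cons_eq, Multiset.coe_le]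
      exact (List.sublist_append_left _ d).subperm.trans perm.subperm

lemma filter_mem_shotMultisets {p : V → Prop} (hp : ∀ u w, 0 < E u w → p w → p u)
    {s : Multiset V} (hs : s ∈ shotMultisets E O) : s.filter p ∈ shotMultisets E O := by
  obtain ⟨l, hl, rfl⟩ := hs
  exact ⟨l.filter p, hl.filter hp fun _ _ => rfl, (Multiset.filter_coe p l).symm⟩

theorem Generates.exists_orderEmbedding {L : Type*} [PartialOrder L] (hgen : Generates E O L)
    (hE : AcyclicG E) : ∃ φ : L ↪o Multiset V, Set.range φ = shotMultisets E O := by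
  obtain ⟨f, hf⟩ := hgen
  choose seq valid fireList_seq using fun a => (f a).2
  have map_le_iff : ∀ a b, (seq a : Multiset V) ≤ seq b ↔ a ≤ b := fun a b => by
    rw [Multiset.coe_le, ← hE.reaches_fireList_iff (valid a) (valid b), fireList_seq,
      fireList_seq, hf]
  refine ⟨.ofMapLEIff (fun a => (seq a : Multiset V)) map_le_iff, Set.Subset.antisymm ?_ ?_⟩
  · rintro _ ⟨a, rfl⟩
    exact ⟨seq a, valid a, rfl⟩
  · rintro _ ⟨l, hl, rfl⟩
    obtain ⟨a, ha⟩ := f.surjective ⟨fireList E O l, l, hl, rfl⟩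
    have fireList_eq : fireList E O (seq a) = fireList E O l := by rw [fireList_seq, ha]
    exact ⟨a, Multiset.coe_eq_coe.2 (hE.perm_of_fireList_eq (valid a) hl fireList_eq)⟩

end ShotMultisets

/-- In an ordered set embedded by `φ` in the multisets of vertices, `v` is the only vertex whose
firing leads from `m` to another element. -/
def IsSoleFirable {V L : Type*} [PartialOrder L] (φ : L ↪o Multiset V) (m : L) (v : V) : Prop :=
  ∀ u, u ::ₘ φ m ∈ Set.range φ ↔ u = v

section PartialOrder

variable {V L : Type*} [PartialOrder L] {φ : L ↪o Multiset V} {a x y m m' : L} {u v : V}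

lemma IsAntimatroid.covBy_iff (hφ : IsAntimatroid (Set.range φ)) :
    x ⋖ y ↔ ∃ v, φ y = v ::ₘ φ x := by
  constructor
  · intro hxy
    obtain ⟨v, ⟨z, hz⟩, hzy⟩ := hφ.exists_cons_mem_of_lt _ ⟨x, rfl⟩ _ ⟨y, rfl⟩ (φ.strictMono hxy.lt)
    have hxz : x < z := φ.lt_iff_lt.1 (hz ▸ Multiset.lt_cons_self _ _)
    obtain rfl : z = y := eq_of_le_of_not_lt (φ.le_iff_le.1 (hz ▸ hzy)) (hxy.2 hxz)
    exact ⟨v, hz⟩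
  · rintro ⟨v, hv⟩
    exact .of_image φ (hv ▸ Multiset.covBy_cons _ _)

lemma IsSoleFirable.le_iff (hφ : IsAntimatroid (Set.range φ)) (hm : IsSoleFirable φ m v) :
    a ≤ m ↔ (φ a).count v ≤ (φ m).count v := by
  refine ⟨fun h => Multiset.count_le_of_le v (φ.le_iff_le.2 h), fun h => ?_⟩
  obtain ⟨z, hz⟩ := hφ.supClosed ⟨a, rfl⟩ ⟨m, rfl⟩
  have count_z : (φ z).count v = (φ m).count v := by
    rw [hz]
    exact (Multiset.count_union v _ _).trans (sup_eq_right.2 h)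
  have hmz : m ≤ z := φ.le_iff_le.1 (hz ▸ le_sup_right)
  have not_lt : ¬ m < z := fun hlt => by
    obtain ⟨w, hw, hwz⟩ := hφ.exists_cons_mem_of_lt _ ⟨m, rfl⟩ _ ⟨z, rfl⟩ (φ.strictMono hlt)
    obtain rfl := (hm w).1 hw
    have := Multiset.count_le_of_le w hwz
    rw [Multiset.count_cons_self, count_z] at this
    omega
  exact φ.le_iff_le.1 (eq_of_le_of_not_lt hmz not_lt ▸ hz ▸ le_sup_left)

lemma IsSoleFirable.eq_of_count_eq (hφ : IsAntimatroid (Set.range φ)) (hm : IsSoleFirable φ m v)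
    (hm' : IsSoleFirable φ m' v) (h : (φ m).count v = (φ m').count v) : m = m' :=
  le_antisymm ((hm'.le_iff hφ).2 h.le) ((hm.le_iff hφ).2 h.ge)

lemma IsSoleFirable.le_and_not_le_iff (hφ : IsAntimatroid (Set.range φ))
    (hm : IsSoleFirable φ m v) (hy : φ y = u ::ₘ φ x) :
    x ≤ m ∧ ¬ y ≤ m ↔ u = v ∧ (φ x).count v = (φ m).count v := by
  rw [hm.le_iff hφ, hm.le_iff hφ, hy, Multiset.count_cons]
  grind

end PartialOrder

section Lattice

variable {V L : Type*} [Lattice L] {φ : L ↪o Multiset V} {a x y m m₁ m₂ : L} {u v v₁ v₂ : V}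

lemma IsAntimatroid.meetIrred_iff (hφ : IsAntimatroid (Set.range φ)) :
    MeetIrred m ↔ ∃ v, IsSoleFirable φ m v := by
  constructor
  · rintro ⟨y, hy, hunique⟩
    obtain ⟨v, hv⟩ := hφ.covBy_iff.1 hy
    refine ⟨v, fun u => ⟨?_, ?_⟩⟩
    · rintro ⟨z, hz⟩
      obtain rfl := hunique z (hφ.covBy_iff.2 ⟨u, hz⟩)
      exact (Multiset.cons_inj_left _).1 (hz.symm.trans hv)
    · rintro rfl
      exact ⟨y, hv⟩
  · rintro ⟨v, hm⟩
    obtain ⟨y, hy⟩ := (hm v).2 rfl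
    refine ⟨y, hφ.covBy_iff.2 ⟨v, hy⟩, fun z hmz => ?_⟩
    obtain ⟨u, hz⟩ := hφ.covBy_iff.1 hmz
    obtain rfl := (hm u).1 ⟨z, hz⟩
    exact φ.injective (hz.trans hy.symm)

lemma IsSoleFirable.msetDiff_eq_singleton_iff (hφ : IsAntimatroid (Set.range φ))
    (hm : IsSoleFirable φ m v) (hy : φ y = u ::ₘ φ x) :
    MsetDiff x y = {m} ↔ u = v ∧ (φ x).count v = (φ m).count v := by
  rw [← hm.le_and_not_le_iff hφ hy]
  refine ⟨fun h => (h.ge rfl).2, fun h => Set.eq_singleton_iff_unique_mem.2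
    ⟨⟨hφ.meetIrred_iff.2 ⟨v, hm⟩, h⟩, fun m' ⟨hirr, hm'⟩ => ?_⟩⟩
  obtain ⟨v', hv'⟩ := hφ.meetIrred_iff.1 hirr
  obtain ⟨rfl, hcount⟩ := (hm.le_and_not_le_iff hφ hy).1 h
  obtain ⟨rfl, hcount'⟩ := (hv'.le_and_not_le_iff hφ hy).1 hm'
  exact hv'.eq_of_count_eq hφ hm (hcount'.symm.trans hcount)

lemma IsSoleFirable.mem_uset_iff (hφ : IsAntimatroid (Set.range φ)) (hm : IsSoleFirable φ m v) :
    a ∈ Uset m ↔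
      Minimal (fun x => (φ x).count v = (φ m).count v ∧ v ::ₘ φ x ∈ Set.range φ) a := by
  have exists_covBy_iff : ∀ x, (∃ y, x ⋖ y ∧ MsetDiff x y = {m}) ↔
      (φ x).count v = (φ m).count v ∧ v ::ₘ φ x ∈ Set.range φ := fun x => by
    constructor
    · rintro ⟨y, hxy, hdiff⟩
      obtain ⟨u, hy⟩ := hφ.covBy_iff.1 hxy
      obtain ⟨rfl, hcount⟩ := (hm.msetDiff_eq_singleton_iff hφ hy).1 hdiff
      exact ⟨hcount, y, hy⟩
    · rintro ⟨hcount, y, hy⟩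
      exact ⟨y, hφ.covBy_iff.2 ⟨v, hy⟩, (hm.msetDiff_eq_singleton_iff hφ hy).2 ⟨rfl, hcount⟩⟩
  simp only [Uset, exists_covBy_iff, Set.mem_ofPred_eq]

lemma IsSoleFirable.forall_mem_of_mem_uset (hφ : IsAntimatroid (Set.range φ))
    (hm : IsSoleFirable φ m v) (ha : a ∈ Uset m) {p : V → Prop}
    (hp : ∀ s ∈ Set.range φ, s.filter p ∈ Set.range φ) (hv : p v) :
    ∀ u ∈ φ a, p u := by
  intro u hu
  obtain ⟨⟨hcount, hfire⟩, hmin⟩ := (hm.mem_uset_iff hφ).1 ha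
  obtain ⟨a', ha'⟩ := hp _ ⟨a, rfl⟩
  have hle : a' ≤ a := φ.le_iff_le.1 (ha' ▸ Multiset.filter_le p _)
  have hcount' : (φ a').count v = (φ m).count v := by
    rw [ha', Multiset.count_filter_of_pos hv, hcount]
  have hfire' : v ::ₘ φ a' ∈ Set.range φ := by
    rw [ha', ← Multiset.filter_cons_of_pos _ hv]
    exact hp _ hfire
  have hge : φ a ≤ φ a' := φ.le_iff_le.2 (hmin ⟨hcount', hfire'⟩ hle)
  exact Multiset.of_mem_filter (ha' ▸ Multiset.mem_of_le hge hu)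

lemma Gedge.prodLex {r : V → V → Prop} (hφ : IsAntimatroid (Set.range φ))
    (hr : ∀ v, ∀ s ∈ Set.range φ, s.filter (Relation.ReflTransGen r · v) ∈ Set.range φ)
    (h₁ : IsSoleFirable φ m₁ v₁) (h₂ : IsSoleFirable φ m₂ v₂) (h : Gedge m₁ m₂) :
    Prod.Lex (Relation.TransGen r) (· < ·) (v₁, (φ m₁).count v₁) (v₂, (φ m₂).count v₂) := by
  obtain ⟨-, -, a, ha, -, hna⟩ := h
  have hlt : (φ m₁).count v₁ < (φ a).count v₁ := by
    rwa [h₁.le_iff hφ, not_le] at hna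
  have hv₁ : v₁ ∈ φ a := Multiset.count_pos.1 (Nat.zero_lt_of_lt hlt)
  have ancestor := h₂.forall_mem_of_mem_uset hφ ha (hr v₂) .refl v₁ hv₁
  rcases Relation.reflTransGen_iff_eq_or_transGen.1 ancestor with rfl | htrans
  · rw [((h₂.mem_uset_iff hφ).1 ha).prop.1] at hlt
    exact .right _ hlt
  · exact .left _ _ htrans

theorem IsAntimatroid.gAcyclic {r : V → V → Prop} (hφ : IsAntimatroid (Set.range φ))
    (hr : ∀ v, ∀ s ∈ Set.range φ, s.filter (Relation.ReflTransGen r · v) ∈ Set.range φ)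
    (hacyc : ∀ v, ¬ Relation.TransGen r v v) : GAcyclic L := by
  intro m hm
  have : Std.Irrefl (Relation.TransGen r) := ⟨hacyc⟩
  obtain ⟨-, ⟨hirr, -⟩, -⟩ := Relation.TransGen.head'_iff.1 hm
  have : Nonempty V := (hφ.meetIrred_iff.1 hirr).nonempty
  choose! label hlabel using fun m : L => hφ.meetIrred_iff (m := m) |>.1
  have lex := hm.lift (fun m => (label m, (φ m).count (label m)))
    fun m₁ m₂ h => h.prodLex hφ hr (hlabel m₁ h.1) (hlabel m₂ h.2.1)
  rw [Relation.transGen_eq_self] at lex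
  exact irrefl _ lex

end Lattice

/- At a vertex with infinitely many out-neighbours `outDeg` is `0`. On an acyclic graph such a
vertex is therefore a sink and never fires, as the convention `outDeg = ∞` would also give. -/
theorem stmt14_general {L : Type*} [Lattice L] {V : Type*} (E : V → V → ℕ) (O : V → ℕ)
    (hacyc : AcyclicG E) (hgen : Generates E O L) : GAcyclic L := by
  obtain ⟨φ, hφ⟩ := hgen.exists_orderEmbedding hacyc
  refine IsAntimatroid.gAcyclic (φ := φ) (hφ ▸ isAntimatroid_shotMultisets) ?_ hacyc
  rw [hφ]
  exact fun v s => filter_mem_shotMultisets fun u w huw hwv => hwv.head huw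

/-- if a finite ULD lattice `L` is generated by a CFG on an acyclic
directed multigraph reaching a unique fixed point, then the directed graph `𝒢` on the
meet-irreducibles of `L` is acyclic. -/
theorem stmt14 {L : Type*} [Lattice L] [Fintype L] [BoundedOrder L]
    (hULD : IsULD L)
    {V : Type*} [Finite V] (E : V → V → ℕ) (O : V → ℕ)
    (hacyc : AcyclicG E) (hUFP : ReachesUFP E O) (hgen : Generates E O L) :
    GAcyclic L :=
  stmt14_general E O hacyc hgen
end

section
/- Every chip firing game on an acyclic directed multigraph reaching a unique fixed point is equivalent to an Abelian Sandpile Model: if CFG(G,O) reaches a unique fixed point and G is acyclic, then there exists an ASM reaching a unique fixed point whose configuration space is order-isomorphic to that of CFG(G,O). In particular, every finite lattice generated by a CFG on an acyclic graph belongs to L(ASM). -/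
open Classical

/-!
Two systems have the same dynamics as soon as a relation that is single-valued in both directions
relates their starting points and is respected by their steps; the given game is linked to a
sandpile by two such relations.

*Unfolding.* On an acyclic graph a vertex `v` sees at most `K v` chips in total, where
`K v = O v + ∑ u, E u v * K u`, so it fires a bounded number of times. Replace it by copies
`(v, 0), (v, 1), …`, the copy `(v, j)` standing for the firing number `j` of `v`. In the resulting
game every copy fires at most once, as soon as enough weight has arrived from the copies already
fired. To enforce the order of the copies, `(v, i)` gives an additional weight `K v` to each later
`(v, j)`, whose threshold is raised by `j * K v`: missing one predecessor cannot be made up for.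

*Symmetrization.* The weights `a` of the unfolded game are still acyclic, so there are scales `k`
with `∑ y, a x y * k y < k x`. Scale the game at `x` by `k x` and join `x` and `y` by
`k y * a x y + k x * a y x` edges in both directions. The chips sent against the direction of `a`
amount to less than `k x` at `x` and thus never decide whether the threshold of `x` is reached.
-/

section PartialIso

variable {α β γ : Type*} {r : α → α → Prop} {s : β → β → Prop} {t : γ → γ → Prop}

/-- `R` is a partial isomorphism between the transition systems `r` and `s`: a bisimulation that is
single-valued in both directions. It transfers reachability without referring to the states outside
its domain. -/
structure IsPartialIso (r : α → α → Prop) (s : β → β → Prop) (R : α → β → Prop) : Prop where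
  biUnique : Relator.BiUnique R
  forth : ∀ ⦃a a' b⦄, R a b → r a a' → ∃ b', R a' b' ∧ s b b'
  back : ∀ ⦃a b b'⦄, R a b → s b b' → ∃ a', R a' b' ∧ r a a'

/-- The transition systems `r` started in `a` and `s` started in `b` have isomorphic reachable
parts. -/
def ReachableIso (r : α → α → Prop) (a : α) (s : β → β → Prop) (b : β) : Prop :=
  ∃ R, IsPartialIso r s R ∧ R a b

namespace IsPartialIso

variable {R : α → β → Prop} {S : β → γ → Prop} {a a' : α} {b b' : β}

theorem flip (h : IsPartialIso r s R) : IsPartialIso s r (flip R) where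
  biUnique := ⟨fun _ _ _ h₁ h₂ => h.biUnique.2 h₁ h₂, fun _ _ _ h₁ h₂ => h.biUnique.1 h₁ h₂⟩
  forth _ _ _ hR hs := h.back hR hs
  back _ _ _ hR hr := h.forth hR hr

theorem comp (h : IsPartialIso r s R) (h' : IsPartialIso s t S) :
    IsPartialIso r t (Relation.Comp R S) where
  biUnique := by
    constructor
    · rintro a₁ c a₂ ⟨b₁, hR₁, hS₁⟩ ⟨b₂, hR₂, hS₂⟩
      obtain rfl := h'.biUnique.1 hS₁ hS₂
      exact h.biUnique.1 hR₁ hR₂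
    · rintro a c₁ c₂ ⟨b₁, hR₁, hS₁⟩ ⟨b₂, hR₂, hS₂⟩
      obtain rfl := h.biUnique.2 hR₁ hR₂
      exact h'.biUnique.2 hS₁ hS₂
  forth := by
    rintro a a' c ⟨b, hR, hS⟩ hr
    obtain ⟨b', hR', hs⟩ := h.forth hR hr
    obtain ⟨c', hS', ht⟩ := h'.forth hS hs
    exact ⟨c', ⟨b', hR', hS'⟩, ht⟩
  back := by
    rintro a c c' ⟨b, hR, hS⟩ ht
    obtain ⟨b', hS', hs⟩ := h'.back hS ht
    obtain ⟨a', hR', hr⟩ := h.back hR hs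
    exact ⟨a', ⟨b', hR', hS'⟩, hr⟩

theorem forth_reflTransGen (h : IsPartialIso r s R) (hR : R a b)
    (ha : Relation.ReflTransGen r a a') : ∃ b', R a' b' ∧ Relation.ReflTransGen s b b' := by
  induction ha with
  | refl => exact ⟨b, hR, .refl⟩
  | tail _ hr ih =>
    obtain ⟨b₁, hR₁, hs₁⟩ := ih
    obtain ⟨b₂, hR₂, hs₂⟩ := h.forth hR₁ hr
    exact ⟨b₂, hR₂, hs₁.tail hs₂⟩

theorem reflTransGen_of_reflTransGen (h : IsPartialIso r s R) (hR : R a b) (hR' : R a' b')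
    (ha : Relation.ReflTransGen r a a') : Relation.ReflTransGen s b b' := by
  obtain ⟨b₁, hR₁, hs⟩ := h.forth_reflTransGen hR ha
  rwa [h.biUnique.2 hR' hR₁]

theorem reflTransGen_iff (h : IsPartialIso r s R) (hR : R a b) (hR' : R a' b') :
    Relation.ReflTransGen r a a' ↔ Relation.ReflTransGen s b b' :=
  ⟨h.reflTransGen_of_reflTransGen hR hR', h.flip.reflTransGen_of_reflTransGen hR hR'⟩

end IsPartialIso

namespace ReachableIso

variable {a : α} {b : β} {c : γ}

theorem trans (h : ReachableIso r a s b) (h' : ReachableIso s b t c) : ReachableIso r a t c := by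
  obtain ⟨R, hR, hab⟩ := h
  obtain ⟨S, hS, hbc⟩ := h'
  exact ⟨_, hR.comp hS, b, hab, hbc⟩

theorem exists_equiv (h : ReachableIso r a s b) :
    ∃ g : {x // Relation.ReflTransGen r a x} ≃ {y // Relation.ReflTransGen s b y},
      ∀ x y, Relation.ReflTransGen r x.1 y.1 ↔ Relation.ReflTransGen s (g x).1 (g y).1 := by
  obtain ⟨R, hR, hab⟩ := h
  choose φ hφR hφ using fun x : {x // Relation.ReflTransGen r a x} =>
    hR.forth_reflTransGen hab x.2
  choose ψ hψR hψ using fun y : {y // Relation.ReflTransGen s b y} =>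
    hR.flip.forth_reflTransGen hab y.2
  exact ⟨{
      toFun x := ⟨φ x, hφ x⟩
      invFun y := ⟨ψ y, hψ y⟩
      left_inv _ := Subtype.ext (hR.biUnique.1 (hψR _) (hφR _))
      right_inv _ := Subtype.ext (hR.biUnique.2 (hφR _) (hψR _)) },
    fun x y => hR.reflTransGen_iff (hφR x) (hφR y)⟩

end ReachableIso

end PartialIso

section FireRel

variable {V W : Type*} {E : V → V → ℕ} {O : V → ℕ} {E' : W → W → ℕ} {O' : W → ℕ}

/-- The transition relation of the chip firing game on `E`: some vertex fires. -/
def FireRel (E : V → V → ℕ) (c c' : V → ℕ) : Prop := ∃ v, FireStep E c v c'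

theorem reaches_eq_reflTransGen (E : V → V → ℕ) :
    Reaches E = Relation.ReflTransGen (FireRel E) := by
  ext c c'
  constructor
  · rintro ⟨l, hl, rfl⟩
    induction l generalizing c with
    | nil => exact .refl
    | cons v l ih => exact .head ⟨v, hl.1, rfl⟩ (ih _ hl.2)
  · intro h
    induction h using Relation.ReflTransGen.head_induction_on with
    | refl => exact ⟨[], trivial, rfl⟩
    | head hstep _ ih =>
      obtain ⟨v, hv, rfl⟩ := hstep
      obtain ⟨l, hl, hc'⟩ := ih
      exact ⟨v :: l, ⟨hv, hl⟩, hc'⟩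

theorem ReachableIso.exists_equiv_reaches (h : ReachableIso (FireRel E) O (FireRel E') O') :
    ∃ g : {c // Reaches E O c} ≃ {c // Reaches E' O' c},
      ∀ x y, Reaches E x.1 y.1 ↔ Reaches E' (g x).1 (g y).1 := by
  rw [reaches_eq_reflTransGen, reaches_eq_reflTransGen]
  exact h.exists_equiv

theorem ReachableIso.reachesUFP (h : ReachableIso (FireRel E) O (FireRel E') O')
    (hE : ReachesUFP E O) : ReachesUFP E' O' := by
  obtain ⟨R, hR, hO⟩ := h
  obtain ⟨p, hp, hfix, htop⟩ := hE
  simp only [ReachesUFP, reaches_eq_reflTransGen] at hp htop ⊢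
  obtain ⟨p', hpR, hp'⟩ := hR.forth_reflTransGen hO hp
  refine ⟨p', hp', fun v hv => ?_, fun c' hc' => ?_⟩
  · obtain ⟨_, _, u, hu, _⟩ := hR.back hpR ⟨v, hv, rfl⟩
    exact hfix u hu
  · obtain ⟨c, hcR, hc⟩ := hR.flip.forth_reflTransGen hO hc'
    exact (hR.reflTransGen_iff hcR hpR).1 (htop c hc)

theorem outDeg_comap (E : V → V → ℕ) (e : W ≃ V) (i : W) :
    outDeg (fun i j => E (e i) (e j)) i = outDeg E (e i) :=
  finsum_comp_equiv e

theorem firable_comap_iff (E : V → V → ℕ) (c : V → ℕ) (e : W ≃ V) (i : W) :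
    Firable (fun i j => E (e i) (e j)) (c ∘ e) i ↔ Firable E c (e i) := by
  simp only [Firable, IsSink, outDeg_comap, Function.comp_apply]

theorem fire_comap (E : V → V → ℕ) (c : V → ℕ) (e : W ≃ V) (i : W) :
    fire (fun i j => E (e i) (e j)) (c ∘ e) i = fire E c (e i) ∘ e := by
  funext j
  simp only [fire, outDeg_comap, Function.comp_apply, e.apply_eq_iff_eq]

theorem reachableIso_comap (E : V → V → ℕ) (O : V → ℕ) (e : W ≃ V) :
    ReachableIso (FireRel E) O (FireRel fun i j => E (e i) (e j)) (O ∘ e) := by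
  refine ⟨fun c c' => c ∘ e = c', ⟨⟨?_, ?_⟩, ?_, ?_⟩, rfl⟩
  · exact fun _ _ _ h₁ h₂ => e.surjective.injective_comp_right (h₁.trans h₂.symm)
  · exact fun _ _ _ h₁ h₂ => h₁.symm.trans h₂
  · rintro c _ _ rfl ⟨v, hv, rfl⟩
    obtain ⟨i, rfl⟩ := e.surjective v
    exact ⟨_, rfl, i, (firable_comap_iff E c e i).2 hv, fire_comap E c e i⟩
  · rintro c _ _ rfl ⟨i, hi, rfl⟩
    exact ⟨_, (fire_comap E c e i).symm, e i, (firable_comap_iff E c e i).1 hi, rfl⟩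

end FireRel

section Acyclic

variable {V W : Type*} {E : V → V → ℕ}

theorem AcyclicG.comap (h : AcyclicG E) (φ : W → V) : AcyclicG fun i j => E (φ i) (φ j) :=
  fun i hi => h (φ i) (hi.lift φ fun _ _ => id)

theorem AcyclicG.transpose (h : AcyclicG E) : AcyclicG fun u v => E v u :=
  fun v hv => h v (Relation.transGen_swap.1 hv)

theorem AcyclicG.wellFounded [Finite V] (h : AcyclicG E) : WellFounded fun u v => 0 < E u v := by
  have : Std.Irrefl (Relation.TransGen fun u v => 0 < E u v) := ⟨h⟩
  exact Subrelation.wf (r := Relation.TransGen fun u v => 0 < E u v)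
    (fun hr => .single hr) (Finite.wellFounded_of_trans_of_irrefl _)

theorem acyclicG_of_wellFounded (h : WellFounded fun u v => 0 < E u v) : AcyclicG E :=
  fun v hv => h.transGen.irrefl.irrefl v hv

theorem AcyclicG.exists_eq_add_sum [Fintype V] (h : AcyclicG E) (b : V → ℕ) :
    ∃ K : V → ℕ, ∀ v, K v = b v + ∑ u, E u v * K u := by
  refine ⟨h.wellFounded.fix fun v K => b v + ∑ u, if hu : 0 < E u v then E u v * K u hu else 0,
    fun v => ?_⟩
  rw [h.wellFounded.fix_eq]
  congr 1
  refine Finset.sum_congr rfl fun u _ => ?_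
  split_ifs with hu
  · rfl
  · rw [Nat.eq_zero_of_not_pos hu, zero_mul]

end Acyclic

section FiringVector

variable {V : Type*}

/-- `f` is a firing vector leading from `O` to `c`: firing each vertex `v` exactly `f v` times
turns `O` into `c`. The order of the firings and their legality are ignored; the balance equation
has the lost chips on the left, so that no subtraction occurs. -/
structure IsFiringVector [Fintype V] (E : V → V → ℕ) (O c f : V → ℕ) : Prop where
  eq_zero_of_isSink : ∀ v, IsSink E v → f v = 0
  balance : ∀ v, c v + outDeg E v * f v = O v + ∑ u, E u v * f u

variable {E : V → V → ℕ} {O c c' f g K : V → ℕ}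

theorem outDeg_pos_of_not_isSink [Finite V] {v : V} (hv : ¬ IsSink E v) : 0 < outDeg E v := by
  have := Fintype.ofFinite V
  rw [IsSink, outDeg, finsum_eq_sum_of_fintype] at hv
  rw [outDeg, finsum_eq_sum_of_fintype]
  have : E v v ≤ ∑ u, E v u := Finset.single_le_sum_of_canonicallyOrdered (Finset.mem_univ v)
  omega

namespace IsFiringVector

variable [Fintype V]

theorem zero (E : V → V → ℕ) (O : V → ℕ) : IsFiringVector E O O 0 where
  eq_zero_of_isSink _ _ := rfl
  balance v := by simp

theorem fire [DecidableEq V] (h : IsFiringVector E O c f) {v : V} (hv : Firable E c v) :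
    IsFiringVector E O (fire E c v) (f + Pi.single v 1) where
  eq_zero_of_isSink u hu := by
    have huv : u ≠ v := fun huv => hv.1 (huv ▸ hu)
    simp [h.eq_zero_of_isSink u hu, huv]
  balance u := by
    have hu := h.balance u
    have hsum : ∑ w, E w u * (f + Pi.single v 1 : V → ℕ) w = ∑ w, E w u * f w + E v u := by
      simp [mul_add, Finset.sum_add_distrib, Pi.single_apply]
    rw [hsum]
    by_cases huv : u = v
    · subst huv
      have hle := hv.2
      simp only [_root_.fire, if_true, Pi.add_apply, Pi.single_eq_same, mul_add]
      omega
    · simp only [_root_.fire, if_neg huv, Pi.add_apply, Pi.single_eq_of_ne huv, add_zero]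
      omega

theorem config_unique (h : IsFiringVector E O c f) (h' : IsFiringVector E O c' f) : c = c' := by
  funext v
  have := h.balance v
  have := h'.balance v
  omega

theorem vector_unique (hE : AcyclicG E) (hf : IsFiringVector E O c f)
    (hg : IsFiringVector E O c g) : f = g := by
  funext v
  induction v using hE.wellFounded.induction with
  | _ v ih =>
    have hsum : ∑ u, E u v * f u = ∑ u, E u v * g u := by
      refine Finset.sum_congr rfl fun u _ => ?_
      rcases Nat.eq_zero_or_pos (E u v) with hu | hu
      · simp [hu]
      · rw [ih u hu]
    by_cases hv : IsSink E v
    · rw [hf.eq_zero_of_isSink v hv, hg.eq_zero_of_isSink v hv]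
    · have hfv := hf.balance v
      have hgv := hg.balance v
      exact Nat.eq_of_mul_eq_mul_left (outDeg_pos_of_not_isSink hv) (by omega)

theorem le_received (h : IsFiringVector E O c f) (v : V) : f v ≤ O v + ∑ u, E u v * f u := by
  rw [← h.balance v]
  by_cases hv : IsSink E v
  · simp [h.eq_zero_of_isSink v hv]
  · exact (Nat.le_mul_of_pos_left _ (outDeg_pos_of_not_isSink hv)).trans (Nat.le_add_left _ _)

theorem received_le (hE : AcyclicG E) (hK : ∀ v, K v = O v + ∑ u, E u v * K u)
    (h : IsFiringVector E O c f) (v : V) : O v + ∑ u, E u v * f u ≤ K v := by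
  induction v using hE.wellFounded.induction with
  | _ v ih =>
    rw [hK v]
    gcongr 1
    refine Finset.sum_le_sum fun u _ => ?_
    rcases Nat.eq_zero_or_pos (E u v) with hu | hu
    · simp [hu]
    · exact Nat.mul_le_mul_left _ ((h.le_received u).trans (ih u hu))

end IsFiringVector

end FiringVector

section ThresholdGame

variable {W : Type*}

/-- In the threshold game with weights `a` and thresholds `t`, every element fires at most once. If
the elements of `S` have fired, then `x` is enabled when the weight they send to `x` reaches
`t x`. -/
def ThresholdEnabled (a : W → W → ℕ) (t : W → ℕ) (S : Finset W) (x : W) : Prop :=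
  x ∉ S ∧ t x ≤ ∑ y ∈ S, a y x

/-- The transition relation of the threshold game: an enabled element is added to the set of fired
elements. -/
def ThresholdRel (a : W → W → ℕ) (t : W → ℕ) (S S' : Finset W) : Prop :=
  ∃ x, ∃ hx : ThresholdEnabled a t S x, S.cons x hx.1 = S'

/-- The sandpile graph simulating the threshold game with weights `a`, thresholds `t` and scales
`k`. Its sink is `none`. The edges to the sink absorb the threshold, and one more of them keeps
`some x` from being a sink. -/
def thresholdGraph (a : W → W → ℕ) (t k : W → ℕ) : Option W → Option W → ℕ
  | none, _ => 0
  | some x, none => k x * t x + 1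
  | some x, some y => k y * a x y + k x * a y x

/-- The initial configuration on `thresholdGraph a t k`. The vertex `some x` lacks `k x * t x` chips
to be firable, and holds more chips than it receives when everything fires once, so that it cannot
fire twice. -/
def thresholdInit [Fintype W] (a : W → W → ℕ) (k : W → ℕ) : Option W → ℕ
  | none => 0
  | some x => 1 + ∑ y, (k y * a x y + k x * a y x)

/-- The firing vector on `Option W` in which exactly the elements of `S` have fired, once each. -/
noncomputable def firedOnce (S : Finset W) : Option W → ℕ
  | none => 0
  | some x => if x ∈ S then 1 else 0

variable {a : W → W → ℕ} {t k : W → ℕ} {c : Option W → ℕ} {S : Finset W}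

theorem isSink_thresholdGraph_none (a : W → W → ℕ) (t k : W → ℕ) :
    IsSink (thresholdGraph a t k) none := by
  simp [IsSink, outDeg, thresholdGraph]

theorem firedOnce_empty : firedOnce (∅ : Finset W) = 0 := by
  funext v
  cases v <;> simp [firedOnce]

theorem firedOnce_cons [DecidableEq (Option W)] {x : W} (hx : x ∉ S) :
    firedOnce (S.cons x hx) = firedOnce S + Pi.single (some x) 1 := by
  funext v
  cases v with
  | none => simp [firedOnce]
  | some y =>
    by_cases hyx : y = x
    · subst hyx
      simp [firedOnce, hx]
    · simp [firedOnce, hyx]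

section Fintype

variable [Fintype W]

theorem outDeg_thresholdGraph_some (a : W → W → ℕ) (t k : W → ℕ) (x : W) :
    outDeg (thresholdGraph a t k) (some x) = k x * t x + thresholdInit a k (some x) := by
  rw [outDeg, finsum_eq_sum_of_fintype, Fintype.sum_option]
  simp only [thresholdGraph, thresholdInit]
  omega

theorem sum_lt_thresholdInit (a : W → W → ℕ) (k : W → ℕ) (S : Finset W) (x : W) :
    ∑ y ∈ S, (k y * a x y + k x * a y x) < thresholdInit a k (some x) := by
  have : ∑ y ∈ S, (k y * a x y + k x * a y x) ≤ ∑ y, (k y * a x y + k x * a y x) :=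
    Finset.sum_le_univ_sum_of_nonneg fun _ => Nat.zero_le _
  simp only [thresholdInit]
  omega

end Fintype

theorem not_isSink_thresholdGraph_some [Finite W] (a : W → W → ℕ) (t k : W → ℕ) (x : W) :
    ¬ IsSink (thresholdGraph a t k) (some x) := by
  have := Fintype.ofFinite W
  have := sum_lt_thresholdInit a k {x} x
  rw [Finset.sum_singleton] at this
  simp only [IsSink, outDeg_thresholdGraph_some, thresholdGraph]
  omega

theorem isASM_thresholdGraph [Finite W] (a : W → W → ℕ) (t k : W → ℕ) :
    IsASM (thresholdGraph a t k) := by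
  have hadj (x : W) : 0 < thresholdGraph a t k (some x) none := Nat.succ_pos _
  refine ⟨fun u v => ?_, none, isSink_thresholdGraph_none a t k, fun v hv => ?_, ?_⟩
  · refine Relation.ReflTransGen.trans (b := none) ?_ ?_
    · cases u with
      | none => exact .refl
      | some x => exact .single (.inl (hadj x))
    · cases v with
      | none => exact .refl
      | some x => exact .single (.inr (hadj x))
  · cases v with
    | none => rfl
    | some x => exact absurd hv (not_isSink_thresholdGraph_some a t k x)
  · rintro (_ | x) (_ | y) _ hx hy
    · rfl
    · exact absurd rfl hx
    · exact absurd rfl hy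
    · exact add_comm _ _

variable [Fintype W]

theorem balance_firedOnce
    (h : IsFiringVector (thresholdGraph a t k) (thresholdInit a k) c (firedOnce S)) (x : W) :
    c (some x) + (if x ∈ S then k x * t x + thresholdInit a k (some x) else 0) =
      thresholdInit a k (some x) + ∑ y ∈ S, (k y * a x y + k x * a y x) := by
  have hx := h.balance (some x)
  rw [Fintype.sum_option] at hx
  simpa [outDeg_thresholdGraph_some, firedOnce, thresholdGraph, add_comm (k x * _)] using hx

theorem mem_iff_lt_thresholdInit
    (h : IsFiringVector (thresholdGraph a t k) (thresholdInit a k) c (firedOnce S)) (x : W) :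
    x ∈ S ↔ c (some x) < thresholdInit a k (some x) := by
  have hx := balance_firedOnce h x
  have hlt := sum_lt_thresholdInit a k S x
  split_ifs at hx with hS
  · exact iff_of_true hS (by omega)
  · exact iff_of_false hS (by omega)

theorem firable_thresholdGraph_iff (hk : ∀ x, ∑ y, a x y * k y < k x)
    (h : IsFiringVector (thresholdGraph a t k) (thresholdInit a k) c (firedOnce S)) (x : W) :
    Firable (thresholdGraph a t k) c (some x) ↔ ThresholdEnabled a t S x := by
  rw [Firable, and_iff_right (not_isSink_thresholdGraph_some a t k x), outDeg_thresholdGraph_some,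
    ThresholdEnabled]
  by_cases hS : x ∈ S
  · have := (mem_iff_lt_thresholdInit h x).1 hS
    exact iff_of_false (by omega) (not_and_of_not_left _ (not_not_intro hS))
  · have hx := balance_firedOnce h x
    rw [if_neg hS, Finset.sum_add_distrib, ← Finset.mul_sum] at hx
    have hback : ∑ y ∈ S, k y * a x y < k x := by
      refine lt_of_le_of_lt ?_ (hk x)
      simp only [mul_comm (k _)]
      exact Finset.sum_le_univ_sum_of_nonneg fun _ => Nat.zero_le _
    calc
      k x * t x + thresholdInit a k (some x) ≤ c (some x)
        ↔ k x * t x < k x * (∑ y ∈ S, a y x + 1) := by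
          constructor
          · intro hle
            rw [mul_add_one]
            omega
          · intro hlt
            have := Nat.mul_le_mul_left (k x) (Nat.lt_succ_iff.1 (Nat.lt_of_mul_lt_mul_left hlt))
            omega
      _ ↔ t x ≤ ∑ y ∈ S, a y x := by
          rw [Nat.mul_lt_mul_left (by omega), Nat.lt_succ_iff]
      _ ↔ x ∉ S ∧ t x ≤ ∑ y ∈ S, a y x := (and_iff_right hS).symm

theorem isPartialIso_thresholdGraph (hk : ∀ x, ∑ y, a x y * k y < k x) :
    IsPartialIso (ThresholdRel a t) (FireRel (thresholdGraph a t k)) fun S c =>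
      IsFiringVector (thresholdGraph a t k) (thresholdInit a k) c (firedOnce S) where
  biUnique := by
    refine ⟨fun S c S' h h' => ?_, fun _ _ _ h h' => h.config_unique h'⟩
    ext x
    rw [mem_iff_lt_thresholdInit h, mem_iff_lt_thresholdInit h']
  forth := by
    rintro S _ c h ⟨x, hx, rfl⟩
    have hfire := (firable_thresholdGraph_iff hk h x).2 hx
    exact ⟨_, firedOnce_cons hx.1 ▸ h.fire hfire, some x, hfire, rfl⟩
  back := by
    rintro S c _ h ⟨_ | x, hfire, rfl⟩
    · exact absurd (isSink_thresholdGraph_none a t k) hfire.1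
    · have hx := (firable_thresholdGraph_iff hk h x).1 hfire
      exact ⟨_, firedOnce_cons hx.1 ▸ h.fire hfire, x, hx, rfl⟩

theorem AcyclicG.exists_reachableIso_thresholdGraph (ha : AcyclicG a) (t : W → ℕ) :
    ∃ k, ReachableIso (ThresholdRel a t) ∅ (FireRel (thresholdGraph a t k))
      (thresholdInit a k) := by
  obtain ⟨k, hk⟩ := ha.transpose.exists_eq_add_sum fun _ => 1
  refine ⟨k, _, isPartialIso_thresholdGraph fun x => ?_, ?_⟩
  · have := hk x
    omega
  · simpa only [firedOnce_empty] using IsFiringVector.zero _ _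

end ThresholdGame

theorem succ_mul_add_mul_le_iff {c d j m B : ℕ} (hd : 0 < d) (hB : c + d * m ≤ B) (hmj : m ≤ j) :
    (j + 1) * d + B * j ≤ c + d * m + B * m ↔ j = m ∧ d ≤ c := by
  rcases hmj.eq_or_lt with rfl | hlt
  · rw [eq_self, true_and, add_le_add_iff_right, add_one_mul, mul_comm, add_comm,
      add_le_add_iff_right]
  · refine iff_of_false (not_le.2 ?_) fun h => hlt.ne' h.1
    calc
      c + d * m + B * m ≤ B * (m + 1) := by rw [mul_add_one]; omega
      _ ≤ B * j := Nat.mul_le_mul_left B hlt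
      _ < (j + 1) * d + B * j := Nat.lt_add_of_pos_left (Nat.mul_pos j.succ_pos hd)

section Unfolding

variable {V : Type*} {E : V → V → ℕ} {O K f g : V → ℕ} {M : ℕ}

/-- The weights of the unfolded game, in which `(v, j)` stands for the firing number `j` (counted
from `0`) of the vertex `v`. The weights `K` enforce that the copies of a vertex fire in order. -/
noncomputable def unfoldWeight (E : V → V → ℕ) (K : V → ℕ) (M : ℕ) (p q : V × Fin M) : ℕ :=
  E p.1 q.1 + if p.1 = q.1 ∧ p.2 < q.2 then K q.1 else 0

/-- The number of chips a vertex needs for a firing. For a sink this is a number above the bound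
`K` on the chips it ever holds, so that sinks need no separate treatment. -/
noncomputable def firingCost (E : V → V → ℕ) (K : V → ℕ) (v : V) : ℕ :=
  if IsSink E v then K v + 1 else outDeg E v

/-- The thresholds of the unfolded game. The truncated subtraction is harmless, since thresholds
only occur as lower bounds of natural numbers. -/
noncomputable def unfoldThreshold (E : V → V → ℕ) (O K : V → ℕ) (M : ℕ) (q : V × Fin M) : ℕ :=
  (q.2 + 1) * firingCost E K q.1 + K q.1 * q.2 - O q.1

/-- The set of copies that have fired when each vertex `v` has fired `f v` times. -/
def unfoldSet [Fintype V] (M : ℕ) (f : V → ℕ) : Finset (V × Fin M) :=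
  Finset.univ.filter fun p => (p.2 : ℕ) < f p.1

theorem AcyclicG.acyclicG_unfoldWeight [Finite V] (hE : AcyclicG E) (K : V → ℕ) (M : ℕ) :
    AcyclicG (unfoldWeight E K M) := by
  refine acyclicG_of_wellFounded <| Subrelation.wf (fun {p q} hpq => Prod.lex_def.2 ?_)
    (hE.wellFounded.prod_lex (wellFounded_lt (α := Fin M)))
  by_contra! hlex
  have hE0 : E p.1 q.1 = 0 := Nat.le_zero.1 hlex.1
  have hlt : ¬ (p.1 = q.1 ∧ p.2 < q.2) := fun h => (hlex.2 h.1).not_gt h.2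
  simp [unfoldWeight, hE0, hlt] at hpq

theorem firingCost_pos [Finite V] (E : V → V → ℕ) (K : V → ℕ) (v : V) : 0 < firingCost E K v := by
  rw [firingCost]
  split_ifs with hv
  · exact Nat.succ_pos _
  · exact outDeg_pos_of_not_isSink hv

theorem firable_iff_firingCost_le {c : V → ℕ} {v : V} (hc : c v ≤ K v) :
    Firable E c v ↔ firingCost E K v ≤ c v := by
  by_cases hv : IsSink E v
  · simpa [Firable, firingCost, hv] using Nat.lt_succ_of_le hc
  · simp [Firable, firingCost, hv]

section Fintype

variable [Fintype V]

theorem mem_unfoldSet {p : V × Fin M} : p ∈ unfoldSet M f ↔ (p.2 : ℕ) < f p.1 := by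
  simp [unfoldSet]

theorem unfoldSet_zero : unfoldSet M (0 : V → ℕ) = ∅ := by
  simp [unfoldSet]

theorem cons_unfoldSet [DecidableEq V] {v : V} {j : Fin M} (hj : (j : ℕ) = f v)
    (h : (v, j) ∉ unfoldSet M f) :
    (unfoldSet M f).cons (v, j) h = unfoldSet M (f + Pi.single v 1) := by
  ext ⟨u, i⟩
  rw [Finset.mem_cons, mem_unfoldSet, mem_unfoldSet]
  by_cases hu : u = v
  · subst hu
    simp only [Prod.mk.injEq, true_and, Pi.add_apply, Pi.single_eq_same, Fin.ext_iff]
    omega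
  · simp [hu]

theorem le_of_unfoldSet_subset (hf : ∀ v, f v ≤ M) (h : unfoldSet M f ⊆ unfoldSet M g) :
    f ≤ g := by
  intro v
  by_contra! hlt
  have hmem : (v, ⟨g v, hlt.trans_le (hf v)⟩) ∈ unfoldSet M f := mem_unfoldSet.2 hlt
  exact lt_irrefl _ (mem_unfoldSet.1 (h hmem))

theorem injOn_unfoldSet (M : ℕ) : Set.InjOn (unfoldSet M) {f : V → ℕ | ∀ v, f v ≤ M} :=
  fun _ hf _ hg h =>
    le_antisymm (le_of_unfoldSet_subset hf h.subset) (le_of_unfoldSet_subset hg h.symm.subset)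

theorem sum_unfoldSet (M : ℕ) (f : V → ℕ) (w : V × Fin M → ℕ) :
    ∑ p ∈ unfoldSet M f, w p = ∑ v, ∑ j with (j : Fin M).val < f v, w (v, j) := by
  simp only [unfoldSet, Finset.sum_filter, Fintype.sum_prod_type]

theorem sum_unfoldWeight (E : V → V → ℕ) (K : V → ℕ) (hf : ∀ v, f v ≤ M) {v : V} {j : Fin M}
    (hj : f v ≤ j) :
    ∑ p ∈ unfoldSet M f, unfoldWeight E K M p (v, j) = ∑ u, E u v * f u + K v * f v := by
  have hcard (u : V) : (Finset.univ.filter fun i : Fin M => (i : ℕ) < f u).card = f u := by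
    rw [Fin.card_filter_val_lt, min_eq_right (hf u)]
  simp only [unfoldWeight, Finset.sum_add_distrib]
  congr 1
  · simp [sum_unfoldSet, hcard, mul_comm]
  · rw [sum_unfoldSet, Finset.sum_eq_single v (fun u _ hu => by simp [hu]) (by simp)]
    have hlt (i : Fin M) (hi : i ∈ Finset.univ.filter fun i : Fin M => (i : ℕ) < f v) : i < j :=
      Fin.lt_def.2 ((Finset.mem_filter.1 hi).2.trans_le hj)
    rw [Finset.sum_congr rfl fun i hi => if_pos ⟨rfl, hlt i hi⟩, Finset.sum_const, hcard,
      smul_eq_mul, mul_comm]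

theorem IsFiringVector.firingCost_mul {c : V → ℕ} (h : IsFiringVector E O c f) (K : V → ℕ)
    (v : V) : firingCost E K v * f v = outDeg E v * f v := by
  by_cases hv : IsSink E v
  · simp [h.eq_zero_of_isSink v hv]
  · simp [firingCost, hv]

theorem IsFiringVector.thresholdEnabled_unfold_iff {c : V → ℕ} (h : IsFiringVector E O c f)
    (hK : ∀ v, O v + ∑ u, E u v * f u ≤ K v) (hf : ∀ v, f v ≤ M) (v : V) (j : Fin M) :
    ThresholdEnabled (unfoldWeight E K M) (unfoldThreshold E O K M) (unfoldSet M f) (v, j) ↔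
      (j : ℕ) = f v ∧ Firable E c v := by
  have hbal : O v + ∑ u, E u v * f u = c v + firingCost E K v * f v := by
    rw [h.firingCost_mul, h.balance]
  have hv := hK v
  rw [hbal] at hv
  rw [ThresholdEnabled, mem_unfoldSet, not_lt]
  by_cases hj : f v ≤ j
  · rw [and_iff_right hj, sum_unfoldWeight E K hf hj, unfoldThreshold, tsub_le_iff_left,
      ← add_assoc, hbal, succ_mul_add_mul_le_iff (firingCost_pos E K v) hv hj,
      firable_iff_firingCost_le ((Nat.le_add_right _ _).trans hv)]
  · exact iff_of_false (fun h => hj h.1) fun h => hj h.1.ge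

theorem AcyclicG.isPartialIso_unfold (hE : AcyclicG E) (hK : ∀ v, K v = O v + ∑ u, E u v * K u)
    (hM : ∀ v, K v < M) :
    IsPartialIso (FireRel E) (ThresholdRel (unfoldWeight E K M) (unfoldThreshold E O K M))
      fun c S => ∃ f, IsFiringVector E O c f ∧ unfoldSet M f = S := by
  have hrec {c f} (h : IsFiringVector E O c f) := h.received_le hE hK
  have hlt {c f} (h : IsFiringVector E O c f) (v : V) : f v < M :=
    ((h.le_received v).trans (hrec h v)).trans_lt (hM v)
  have henabled {c f} (h : IsFiringVector E O c f) :=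
    h.thresholdEnabled_unfold_iff (hrec h) fun v => (hlt h v).le
  refine ⟨⟨?_, ?_⟩, ?_, ?_⟩
  · rintro c _ c' ⟨f, hf, rfl⟩ ⟨f', hf', heq⟩
    obtain rfl := injOn_unfoldSet M (fun v => (hlt hf' v).le) (fun v => (hlt hf v).le) heq
    exact hf.config_unique hf'
  · rintro c _ _ ⟨f, hf, rfl⟩ ⟨f', hf', rfl⟩
    rw [hf.vector_unique hE hf']
  · rintro c _ _ ⟨f, hf, rfl⟩ ⟨v, hv, rfl⟩
    have hx := (henabled hf v ⟨f v, hlt hf v⟩).2 ⟨rfl, hv⟩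
    exact ⟨_, ⟨_, hf.fire hv, (cons_unfoldSet (f := f) rfl hx.1).symm⟩, _, hx, rfl⟩
  · rintro c _ _ ⟨f, hf, rfl⟩ ⟨⟨v, j⟩, hx, rfl⟩
    obtain ⟨hj, hv⟩ := (henabled hf v j).1 hx
    exact ⟨_, ⟨_, hf.fire hv, (cons_unfoldSet hj hx.1).symm⟩, v, hv, rfl⟩

end Fintype

theorem AcyclicG.exists_reachableIso_thresholdRel [Finite V] (hE : AcyclicG E) (O : V → ℕ) :
    ∃ (M : ℕ) (a : V × Fin M → V × Fin M → ℕ) (t : V × Fin M → ℕ),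
      AcyclicG a ∧ ReachableIso (FireRel E) O (ThresholdRel a t) ∅ := by
  have := Fintype.ofFinite V
  obtain ⟨K, hK⟩ := hE.exists_eq_add_sum O
  obtain ⟨M, hM⟩ := Finite.exists_le K
  exact ⟨M + 1, _, _, hE.acyclicG_unfoldWeight K (M + 1), _,
    hE.isPartialIso_unfold hK fun v => Nat.lt_succ_of_le (hM v),
    0, .zero E O, unfoldSet_zero⟩

end Unfolding

theorem AcyclicG.exists_isASM_reachableIso {V : Type*} [Finite V] {E : V → V → ℕ}
    (hE : AcyclicG E) (O : V → ℕ) :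
    ∃ (V' : Type) (_ : Finite V') (E' : V' → V' → ℕ) (O' : V' → ℕ),
      IsASM E' ∧ ReachableIso (FireRel E) O (FireRel E') O' := by
  obtain ⟨n, ⟨e⟩⟩ := Finite.exists_equiv_fin V
  obtain ⟨M, a, t, ha, hunfold⟩ :=
    (hE.comap e.symm).exists_reachableIso_thresholdRel (O ∘ e.symm)
  obtain ⟨k, hsym⟩ := ha.exists_reachableIso_thresholdGraph t
  exact ⟨Option (Fin n × Fin M), inferInstance, thresholdGraph a t k, thresholdInit a k,
    isASM_thresholdGraph a t k, (reachableIso_comap E O e.symm).trans (hunfold.trans hsym)⟩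

/-- every CFG on an acyclic directed multigraph reaching a unique fixed
point is equivalent to an ASM; in particular, every finite lattice generated by a CFG
on an acyclic graph belongs to `L(ASM)`. -/
theorem stmt15 {V : Type*} [Finite V] (E : V → V → ℕ) (O : V → ℕ)
    (hacyc : AcyclicG E) (hUFP : ReachesUFP E O) :
    (∃ (V' : Type) (_ : Finite V') (E' : V' → V' → ℕ) (O' : V' → ℕ),
      IsASM E' ∧ ReachesUFP E' O' ∧
      ∃ g : {c : V → ℕ // Reaches E O c} ≃ {c : V' → ℕ // Reaches E' O' c},
        ∀ a b : {c : V → ℕ // Reaches E O c},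
          Reaches E a.val b.val ↔ Reaches E' (g a).val (g b).val) ∧
    (∀ (L : Type) [PartialOrder L], Generates E O L → MemLASM L) := by
  obtain ⟨V', hfin, E', O', hASM, hiso⟩ := hacyc.exists_isASM_reachableIso O
  have hUFP' : ReachesUFP E' O' := hiso.reachesUFP hUFP
  obtain ⟨g, hg⟩ := hiso.exists_equiv_reaches
  refine ⟨⟨V', hfin, E', O', hASM, hUFP', g, hg⟩, fun L _ ⟨φ, hφ⟩ => ?_⟩
  exact ⟨V', hfin, E', O', hASM, hUFP', φ.trans g, fun x y => (hφ x y).trans (hg _ _)⟩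
end
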